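/- Let a, b ∈ F_p be nonzero with exponents satisfying e_a − e_b ≥ p. If a ≥ b > 0 then RD(a + b) = a; if a ≤ b < 0 then RU(a + b) = a. Consequently, in these situations Fast2Sum applied to (a, b) with the corresponding directed rounding at every step is error-free and returns exactly (a, b). -/

import Mathlib

/-!
Write `u = 2 ^ e_a`. The exponent gap says exactly that `|b| < u`. For `a > 0`, the floating-point
numbers `≥ a` are integer multiples of `u`, so none lies strictly between `a` and `a + u`; since
`a ≤ a + b < a + u`, rounding down gives `s = a`. The remaining steps are then exact: `s - a = 0`
and `b - 0 = b` are floating-point numbers. Negative inputs follow from `RU x = -RD (-x)`.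
-/

/-- The radix-2, precision-`p` floating-point numbers with unlimited exponent range. -/
def Fp (p : ℕ) : Set ℝ := {x : ℝ | ∃ M e : ℤ, |M| ≤ 2 ^ p - 1 ∧ x = (M : ℝ) * (2 : ℝ) ^ e}

/-- Round toward `-∞`: the largest floating-point number `≤ x`. -/
noncomputable def RD (p : ℕ) (x : ℝ) : ℝ := sSup {f : ℝ | f ∈ Fp p ∧ f ≤ x}

/-- Round toward `+∞`: the smallest floating-point number `≥ x`. -/
noncomputable def RU (p : ℕ) (x : ℝ) : ℝ := sInf {f : ℝ | f ∈ Fp p ∧ x ≤ f}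

/-- `y` is a faithful rounding of `x`. -/
def Faithful (p : ℕ) (x y : ℝ) : Prop := y = RD p x ∨ y = RU p x

/-- The exponent of a nonzero `a ∈ F_p`: `e_a = ⌊log₂ |a|⌋ - p + 1`. -/
noncomputable def fpExp (p : ℕ) (a : ℝ) : ℤ := Int.log 2 |a| - (p : ℤ) + 1

section Rounding

variable {p : ℕ} {a b x y : ℝ} {k : ℤ}

namespace Fp

lemma zero_mem (p : ℕ) : (0 : ℝ) ∈ Fp p :=
  ⟨0, 0, by simpa using one_le_pow₀ (one_le_two (α := ℤ)), by simp⟩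

lemma neg_mem (hx : x ∈ Fp p) : -x ∈ Fp p := by
  obtain ⟨M, e, hM, rfl⟩ := hx
  exact ⟨-M, e, by rwa [abs_neg], by push_cast; ring⟩

lemma neg_mem_iff : -x ∈ Fp p ↔ x ∈ Fp p :=
  ⟨fun hx => neg_neg x ▸ neg_mem hx, neg_mem⟩

lemma exists_eq_int_mul_zpow (hx : x ∈ Fp p) (hk : (2 : ℝ) ^ k ≤ |x|) :
    ∃ N : ℤ, x = N * (2 : ℝ) ^ (k - p + 1) := by
  obtain ⟨M, e, hM, rfl⟩ := hx
  have hM_lt : |(M : ℝ)| < 2 ^ p := by exact_mod_cast Int.lt_of_le_sub_one hM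
  have hpow_lt : (2 : ℝ) ^ k < 2 ^ (p + e) := by
    calc (2 : ℝ) ^ k ≤ |M * (2 : ℝ) ^ e| := hk
      _ = |(M : ℝ)| * 2 ^ e := by rw [abs_mul, abs_zpow, abs_two]
      _ < 2 ^ p * 2 ^ e := by gcongr
      _ = 2 ^ (p + e) := by rw [zpow_add₀ two_ne_zero, zpow_natCast]
  have hk_lt : k < p + e := (zpow_lt_zpow_iff_right₀ one_lt_two).mp hpow_lt
  obtain ⟨n, hn⟩ := Int.eq_ofNat_of_zero_le (by lia : 0 ≤ e - (k - p + 1))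
  refine ⟨M * 2 ^ n, ?_⟩
  rw [eq_add_of_sub_eq hn, zpow_add₀ two_ne_zero, zpow_natCast]
  push_cast
  ring

lemma le_of_lt_add_zpow (hx : x ∈ Fp p) (hy : y ∈ Fp p) (hk : (2 : ℝ) ^ k ≤ x)
    (hyx : y < x + 2 ^ (k - p + 1)) : y ≤ x := by
  by_contra! hxy
  obtain ⟨M, hM⟩ := exists_eq_int_mul_zpow hx (hk.trans (le_abs_self x))
  obtain ⟨N, hN⟩ := exists_eq_int_mul_zpow hy ((hk.trans hxy.le).trans (le_abs_self y))
  have hu : (0 : ℝ) < 2 ^ (k - p + 1) := by positivity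
  rw [hM, hN] at hxy
  rw [hM, hN, ← add_one_mul] at hyx
  have hMN : M < N := by exact_mod_cast lt_of_mul_lt_mul_right hxy hu.le
  have hNM : N < M + 1 := by exact_mod_cast lt_of_mul_lt_mul_right hyx hu.le
  lia

end Fp

lemma fpExp_neg (p : ℕ) (a : ℝ) : fpExp p (-a) = fpExp p a := by
  rw [fpExp, fpExp, abs_neg]

lemma abs_lt_two_zpow_iff_fpExp_add_le (hb : b ≠ 0) : |b| < 2 ^ k ↔ fpExp p b + p ≤ k := by
  have hlog : |b| < (2 : ℝ) ^ k ↔ Int.log 2 |b| < k := by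
    exact_mod_cast Int.lt_zpow_iff_log_lt (b := 2) one_lt_two (abs_pos.mpr hb)
  rw [hlog, fpExp]
  lia

lemma RD_eq_self (hx : x ∈ Fp p) : RD p x = x :=
  IsGreatest.csSup_eq ⟨⟨hx, le_rfl⟩, fun _ hf => hf.2⟩

lemma RU_eq_neg_RD_neg (p : ℕ) (x : ℝ) : RU p x = -RD p (-x) := by
  have hset : -{f : ℝ | f ∈ Fp p ∧ x ≤ f} = {f : ℝ | f ∈ Fp p ∧ f ≤ -x} := by
    ext f
    simp only [Set.mem_neg, Set.mem_ofPred_eq, Fp.neg_mem_iff, le_neg]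
  rw [RU, RD, ← hset, Real.sSup_neg, neg_neg]

lemma RU_eq_self (hx : x ∈ Fp p) : RU p x = x := by
  rw [RU_eq_neg_RD_neg, RD_eq_self (Fp.neg_mem hx), neg_neg]

lemma RD_add_eq_left (ha : a ∈ Fp p) (ha0 : 0 < a) (hb0 : 0 ≤ b) (hb : b < 2 ^ fpExp p a) :
    RD p (a + b) = a := by
  have hlog : (2 : ℝ) ^ Int.log 2 a ≤ a := by
    exact_mod_cast Int.zpow_log_le_self (b := 2) one_lt_two ha0
  rw [fpExp, abs_of_pos ha0] at hb
  exact IsGreatest.csSup_eq ⟨⟨ha, le_add_of_nonneg_right hb0⟩, fun f ⟨hf, hfab⟩ =>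
    Fp.le_of_lt_add_zpow ha hf hlog (hfab.trans_lt (by gcongr))⟩

lemma RU_add_eq_left (ha : a ∈ Fp p) (ha0 : a < 0) (hb0 : b ≤ 0) (hb : -b < 2 ^ fpExp p a) :
    RU p (a + b) = a := by
  rw [← fpExp_neg] at hb
  rw [RU_eq_neg_RD_neg, neg_add,
    RD_add_eq_left (Fp.neg_mem ha) (neg_pos.mpr ha0) (neg_nonneg.mpr hb0) hb, neg_neg]

/-- The output `(s, t)` of Fast2Sum on the inputs `(a, b)`, with the same rounding function `R`
used for all three operations `s = R (a + b)`, `d = R (s - a)`, `t = R (b - d)`. -/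
def fast2Sum (R : ℝ → ℝ) (a b : ℝ) : ℝ × ℝ :=
  (R (a + b), R (b - R (R (a + b) - a)))

lemma fast2Sum_eq_of_round_add_eq_left {R : ℝ → ℝ} (hR : ∀ x ∈ Fp p, R x = x) (hb : b ∈ Fp p)
    (hs : R (a + b) = a) : fast2Sum R a b = (a, b) := by
  rw [fast2Sum, hs, sub_self, hR 0 (Fp.zero_mem p), sub_zero, hR b hb]

end Rounding

/-- If `e_a - e_b ≥ p`, then for `a ≥ b > 0` we have `RD(a+b) = a`, and for
`a ≤ b < 0` we have `RU(a+b) = a`; consequently Fast2Sum applied to `(a, b)` with the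
corresponding directed rounding at every step is error-free and returns exactly
`(a, b)` (the computed `s = R(a+b)` equals `a` and `t = R(b - R(s - a))` equals `b`). -/
theorem fast2Sum_exact_of_large_exponent_gap
    (p : ℕ) (hp : 2 ≤ p) (a b : ℝ)
    (ha : a ∈ Fp p) (hb : b ∈ Fp p) (ha0 : a ≠ 0) (hb0 : b ≠ 0)
    (hexp : (p : ℤ) ≤ fpExp p a - fpExp p b) :
    (b ≤ a → 0 < b →
      RD p (a + b) = a ∧ RD p (b - RD p (RD p (a + b) - a)) = b) ∧
    (a ≤ b → b < 0 →
      RU p (a + b) = a ∧ RU p (b - RU p (RU p (a + b) - a)) = b) := by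
  have hb_lt : |b| < 2 ^ fpExp p a :=
    (abs_lt_two_zpow_iff_fpExp_add_le hb0).mpr (le_sub_iff_add_le'.mp hexp)
  constructor
  · intro hba hb_pos
    have hs : RD p (a + b) = a :=
      RD_add_eq_left ha (hb_pos.trans_le hba) hb_pos.le (abs_of_pos hb_pos ▸ hb_lt)
    exact Prod.mk.inj (fast2Sum_eq_of_round_add_eq_left (fun _ => RD_eq_self) hb hs)
  · intro hab hb_neg
    have hs : RU p (a + b) = a :=
      RU_add_eq_left ha (hab.trans_lt hb_neg) hb_neg.le (abs_of_neg hb_neg ▸ hb_lt)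
    exact Prod.mk.inj (fast2Sum_eq_of_round_add_eq_left (fun _ => RU_eq_self) hb hs)
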